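/- Let q be a prime power and n an odd positive integer with n | q²−1 and n > q+1. Let δ ∈ F_{q²}* \ F_q be an element of order n, and let C ⊆ F_q[x]/(x^n − 1) be the cyclic code with generator polynomial g(x) = (x−δ^{−q})(x−δ^{−1})(x−1)(x−δ)(x−δ^q). Suppose the minimum Hamming distance of C equals 4. Then C is an (n,7)_q MDS symbol-pair code if and only if for every integer i with 3 ≤ i ≤ n−3, the element (δ^{i+1} − 1)/(δ^i − δ) does not lie in F_q*. -/

import Mathlib

open Polynomial

/-- The pair-distance between two vectors indexed by `ZMod n`,
with indices taken modulo `n`. -/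
def pairDist {n : ℕ} [NeZero n] {α : Type*} [DecidableEq α] (u v : ZMod n → α) : ℕ :=
  (Finset.univ.filter fun i : ZMod n => (u i, u (i + 1)) ≠ (v i, v (i + 1))).card

/-- A finite subset of `ZMod n` consisting of (at least one) cyclically consecutive elements. -/
def IsArc {n : ℕ} (T : Finset (ZMod n)) : Prop :=
  ∃ (a : ZMod n) (k : ℕ), 0 < k ∧ T = (Finset.range k).image fun j : ℕ => a + (j : ZMod n)

/-- `L(S)`: the minimal number of parts in a partition of `S` into nonempty sets of
cyclically consecutive elements of `ZMod n`. -/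
noncomputable def cycL {n : ℕ} (S : Finset (ZMod n)) : ℕ :=
  sInf {m | ∃ P : Finset (Finset (ZMod n)), P.card = m ∧ (∀ T ∈ P, IsArc T) ∧
    (↑P : Set (Finset (ZMod n))).PairwiseDisjoint id ∧ P.sup id = S}

/-- The polynomial `∑ i, c i * x^i` associated to a vector `c` of length `n`. -/
noncomputable def polyOf {n : ℕ} [NeZero n] {F : Type*} [Semiring F] (c : ZMod n → F) :
    Polynomial F :=
  ∑ i : ZMod n, Polynomial.C (c i) * Polynomial.X ^ i.val

/-- `d` is the minimum pair-distance of the code `Code`. -/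
def IsMinPairDist {n : ℕ} [NeZero n] {α : Type*} [DecidableEq α]
    (Code : Set (ZMod n → α)) (d : ℕ) : Prop :=
  (∀ u ∈ Code, ∀ v ∈ Code, u ≠ v → d ≤ pairDist u v) ∧
    ∃ u ∈ Code, ∃ v ∈ Code, u ≠ v ∧ pairDist u v = d

/-- The coefficient `a₀(i) = ∑_{j=0}^{⌊(i−2)/2⌋} C(i−2−j, j) b^{i−2−2j} c^{j+1}`. -/
noncomputable def aCoeff0 {F : Type*} [Field F] (b c : F) (i : ℕ) : F :=
  ∑ j ∈ Finset.range ((i - 2) / 2 + 1),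
    ((i - 2 - j).choose j : F) * b ^ (i - 2 - 2 * j) * c ^ (j + 1)

/-- The coefficient `a₁(i) = ∑_{j=0}^{⌊(i−1)/2⌋} C(i−1−j, j) b^{i−1−2j} c^{j}`. -/
noncomputable def aCoeff1 {F : Type*} [Field F] (b c : F) (i : ℕ) : F :=
  ∑ j ∈ Finset.range ((i - 1) / 2 + 1),
    ((i - 1 - j).choose j : F) * b ^ (i - 1 - 2 * j) * c ^ j

/-!
The pair-distance of two vectors is the number of positions where they differ plus the number of
cyclic runs these positions form. `C` is a BCH code whose zeros include the three consecutive powers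
`δ⁻¹, 1, δ`, so its nonzero words have weight at least four; a nonzero word of pair-weight at most
six therefore has one run of length at most five, or weight four and two runs. One run is excluded
by a Vandermonde determinant, as `C` has five distinct zeros. A word with two runs is supported,
up to a shift, on `{0, 1, i, i + 1}` or `{0, 1, 2, i + 1}` with `3 ≤ i ≤ n - 3`, and eliminating two
of its four coefficients from the equations at `δ⁻¹, 1, δ` shows that, up to sign, the ratio of the
other two is `(δ ^ (i + 1) - 1) / (δ ^ i - δ)`. Conversely, if this quotient is `τ` in `F`, then
`1 - τ x + τ x ^ i - x ^ (i + 1)` is a word of pair-weight at most six. Finally, `C` has codimension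
five, so it has a nonzero word supported on six consecutive positions, of pair-weight at most seven.
-/

section

open Finset

section Arcs

variable {n : ℕ}

/-- The arc `b, b + 1, …, b + (m - 1)` in `ZMod n`; for `n ≠ 0` its points repeat once `n < m`. -/
def arc (b : ZMod n) (m : ℕ) : Finset (ZMod n) :=
  (range m).image fun j : ℕ => b + (j : ZMod n)

theorem add_natCast_mem_arc {b : ZMod n} {j m : ℕ} (h : j < m) : b + (j : ZMod n) ∈ arc b m :=
  mem_image_of_mem _ (mem_range.2 h)

theorem arc_mono (b : ZMod n) {m m' : ℕ} (h : m ≤ m') : arc b m ⊆ arc b m' :=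
  image_subset_image (range_subset_range.2 h)

theorem injOn_add_natCast (b : ZMod n) {m : ℕ} (hm : m ≤ n) :
    Set.InjOn (fun j : ℕ => b + (j : ZMod n)) (range m) := fun _ hx _ hy hxy =>
  CharP.natCast_injOn_Iio (ZMod n) n ((mem_range.1 hx).trans_le hm) ((mem_range.1 hy).trans_le hm)
    (add_left_cancel hxy)

theorem card_arc (b : ZMod n) {m : ℕ} (hm : m ≤ n) : #(arc b m) = m := by
  rw [arc, card_image_of_injOn (injOn_add_natCast b hm), card_range]

/-- The first points of the maximal runs of consecutive elements of `S`; their number counts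
these runs as soon as `S` is not all of `ZMod n`. -/
def runStarts (S : Finset (ZMod n)) : Finset (ZMod n) :=
  {b ∈ S | b - 1 ∉ S}

theorem mem_runStarts {S : Finset (ZMod n)} {b : ZMod n} :
    b ∈ runStarts S ↔ b ∈ S ∧ b - 1 ∉ S :=
  mem_filter

theorem runStarts_erase {S : Finset (ZMod n)} {b : ZMod n} (h : b + 1 ∉ S) :
    runStarts (S.erase b) = (runStarts S).erase b := by
  ext x
  simp only [mem_runStarts, mem_erase]
  constructor
  · rintro ⟨⟨hxb, hx⟩, hx'⟩
    refine ⟨hxb, hx, fun hx1 => hx' ⟨?_, hx1⟩⟩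
    rintro rfl
    exact h (by simpa using hx)
  · tauto

theorem runStarts_arc_subset (b : ZMod n) (m : ℕ) : runStarts (arc b m) ⊆ {b} := by
  intro x hx
  obtain ⟨hx, hx'⟩ := mem_runStarts.1 hx
  obtain ⟨j, hj, rfl⟩ := mem_image.1 hx
  cases j with
  | zero => simp
  | succ j =>
    refine absurd ?_ hx'
    convert add_natCast_mem_arc (b := b) (Nat.lt_of_succ_lt (mem_range.1 hj)) using 1
    push_cast
    ring

theorem exists_mem_runStarts_arc_subset [NeZero n] {S : Finset (ZMod n)} {s t : ZMod n}
    (hs : s ∈ S) (ht : t ∉ S) :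
    ∃ b ∈ runStarts S, ∃ k < n, s = b + (k : ZMod n) ∧ arc b (k + 1) ⊆ S := by
  classical
  have hex : ∃ m : ℕ, s - m ∉ S := ⟨(s - t).val, by simpa using ht⟩
  obtain ⟨k, hk⟩ : ∃ k, Nat.find hex = k + 1 :=
    Nat.exists_eq_succ_of_ne_zero fun h => Nat.find_spec hex (by simpa [h] using hs)
  have hkn : k + 1 ≤ (s - t).val := hk ▸ Nat.find_min' hex (by simpa using ht)
  have hmem : ∀ m ≤ k, s - m ∈ S := fun m hm => by
    simpa using Nat.find_min hex (hk ▸ Nat.lt_succ_of_le hm)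
  have hnot : s - (k + 1 : ℕ) ∉ S := hk ▸ Nat.find_spec hex
  refine ⟨s - k, mem_runStarts.2 ⟨hmem k le_rfl, ?_⟩, k, ?_, by simp, fun x hx => ?_⟩
  · simpa [sub_sub] using hnot
  · exact (Nat.lt_of_succ_le hkn).trans (ZMod.val_lt _)
  · obtain ⟨j, hj, rfl⟩ := mem_image.1 hx
    have hjk : j ≤ k := Nat.lt_succ_iff.1 (mem_range.1 hj)
    convert hmem (k - j) (Nat.sub_le k j) using 1
    push_cast [hjk]
    ring

theorem subset_arc_of_runStarts_eq_singleton [NeZero n] {S : Finset (ZMod n)} {b t : ZMod n}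
    (ht : t ∉ S) (h : runStarts S = {b}) : S ⊆ arc b #S := by
  intro s hs
  obtain ⟨b', hb', k, hk, rfl, hkS⟩ := exists_mem_runStarts_arc_subset hs ht
  obtain rfl : b' = b := by simpa [h] using hb'
  exact add_natCast_mem_arc ((card_arc b' hk).symm.trans_le (card_le_card hkS))

theorem eq_insert_arc_of_runStarts_eq_pair [NeZero n] {S : Finset (ZMod n)} {b b' t : ZMod n}
    (ht : t ∉ S) (hne : b ≠ b') (h : runStarts S = {b, b'}) (hb' : b' + 1 ∉ S) :
    S = insert b' (arc b (#S - 1)) := by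
  have hb'S : b' ∈ S := (mem_runStarts.1 (h ▸ mem_insert_of_mem (mem_singleton_self b'))).1
  have hstart : runStarts (S.erase b') = {b} := by
    rw [runStarts_erase hb', h, pair_comm, erase_insert (by simpa using hne.symm)]
  have hsub := subset_arc_of_runStarts_eq_singleton (fun ht' => ht (mem_of_mem_erase ht')) hstart
  rw [card_erase_of_mem hb'S] at hsub
  refine eq_of_subset_of_card_le (subset_insert_iff.2 hsub) ?_
  have hpos : 0 < #S := card_pos.2 ⟨b', hb'S⟩
  calc #(insert b' (arc b (#S - 1))) ≤ #(arc b (#S - 1)) + 1 := card_insert_le _ _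
    _ ≤ (#S - 1) + 1 := by
        gcongr
        exact card_image_le.trans (card_range _).le
    _ = #S := Nat.sub_add_cancel hpos

/-- The positions `i` for which the pair `(i, i + 1)` meets `S`: the pair-distance of two vectors
is the size of this set when `S` is the set of positions where they differ. -/
def pairHull (S : Finset (ZMod n)) : Finset (ZMod n) :=
  S ∪ S.image (· - 1)

theorem pairHull_mono {S T : Finset (ZMod n)} (h : S ⊆ T) : pairHull S ⊆ pairHull T :=
  union_subset_union h (image_subset_image h)

theorem card_pairHull (S : Finset (ZMod n)) : #(pairHull S) = #S + #(runStarts S) := by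
  have himage : S.image (· - 1) \ S = (runStarts S).image (· - 1) := by
    ext x
    simp only [mem_sdiff, mem_image, mem_runStarts]
    constructor
    · rintro ⟨⟨b, hb, rfl⟩, hb'⟩
      exact ⟨b, ⟨hb, hb'⟩, rfl⟩
    · rintro ⟨b, ⟨hb, hb'⟩, rfl⟩
      exact ⟨⟨b, hb, rfl⟩, hb'⟩
  rw [pairHull, union_comm, ← card_sdiff_add_card, himage,
    card_image_of_injective _ sub_left_injective, add_comm]

theorem card_pairHull_arc_le (b : ZMod n) (m : ℕ) : #(pairHull (arc b m)) ≤ m + 1 := by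
  rw [card_pairHull]
  have h1 : #(arc b m) ≤ m := card_image_le.trans (card_range m).le
  have h2 : #(runStarts (arc b m)) ≤ 1 :=
    (card_le_card (runStarts_arc_subset b m)).trans (card_singleton b).le
  omega

theorem card_pairHull_two_pairs_le (a b : ZMod n) :
    #(pairHull {a, a + 1, b, b + 1}) ≤ 6 := by
  have hsub : pairHull {a, a + 1, b, b + 1} ⊆ {a - 1, a, a + 1, b - 1, b, b + 1} := by
    intro x
    simp only [pairHull, mem_union, mem_image, mem_insert, mem_singleton]
    grind
  exact (card_le_card hsub).trans card_le_six

/-- The differences `i` at distance at least three from `0` on the cycle `ZMod n`. -/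
def farFromZero (n : ℕ) : Set (ZMod n) :=
  {-2, -1, 0, 1, 2}ᶜ

theorem mem_farFromZero {i : ZMod n} :
    i ∈ farFromZero n ↔ i ≠ -2 ∧ i ≠ -1 ∧ i ≠ 0 ∧ i ≠ 1 ∧ i ≠ 2 := by
  simp [farFromZero]

theorem exists_eq_triple_insert [NeZero n] {S : Finset (ZMod n)} {b b' t : ZMod n}
    (ht : t ∉ S) (hS : #S = 4) (hne : b ≠ b') (h : runStarts S = {b, b'}) (hb' : b' + 1 ∉ S) :
    ∃ i ∈ farFromZero n, S = {b, b + 1, b + 2, b + (i + 1)} := by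
  have hSeq : S = {b, b + 1, b + 2, b'} := by
    rw [eq_insert_arc_of_runStarts_eq_pair ht hne h hb', hS]
    ext x
    simp only [arc, range_add_one, image_insert, mem_insert]
    grind
  have hb'S : b' - 1 ∉ S := (mem_runStarts.1 (by simp [h] : b' ∈ runStarts S)).2
  exact ⟨b' - b - 1, mem_farFromZero.2 (by grind), by rw [hSeq]; congr 1; ring_nf⟩

theorem exists_eq_two_pairs {S : Finset (ZMod n)} {b b' : ZMod n} (hS : #S = 4)
    (h : runStarts S = {b, b'}) (hne : b ≠ b') (hb : b + 1 ∈ S) (hb' : b' + 1 ∈ S) :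
    ∃ i ∈ farFromZero n, S = {b, b + 1, b + i, b + (i + 1)} := by
  obtain ⟨hbS, hb1⟩ : b ∈ S ∧ b - 1 ∉ S := mem_runStarts.1 (by simp [h])
  obtain ⟨hb'S, hb'1⟩ : b' ∈ S ∧ b' - 1 ∉ S := mem_runStarts.1 (by simp [h])
  have hSeq : {b, b + 1, b', b' + 1} = S := by
    refine eq_of_subset_of_card_le (by grind) (hS.trans_le ?_)
    rw [card_insert_of_notMem, card_insert_of_notMem, card_insert_of_notMem, card_singleton] <;>
      grind
  exact ⟨b' - b, mem_farFromZero.2 (by grind), by rw [← hSeq]; ring_nf⟩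

theorem subset_arc_or_four_points_of_card_pairHull_le [NeZero n] (hn : 7 ≤ n)
    {S : Finset (ZMod n)} (h4 : 4 ≤ #S) (h6 : #(pairHull S) ≤ 6) :
    (∃ b, S ⊆ arc b 5) ∨ ∃ b, ∃ i ∈ farFromZero n,
      S = {b, b + 1, b + i, b + (i + 1)} ∨ S = {b, b + 1, b + 2, b + (i + 1)} := by
  rw [card_pairHull] at h6
  obtain ⟨s, hs⟩ : S.Nonempty := card_pos.1 (by omega)
  obtain ⟨t, ht⟩ : ∃ t, t ∉ S := by
    by_contra! hall
    have : #S = n := by rw [eq_univ_iff_forall.2 hall, card_univ, ZMod.card]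
    omega
  have hpos : 0 < #(runStarts S) := by
    obtain ⟨b, hb, -⟩ := exists_mem_runStarts_arc_subset hs ht
    exact card_pos.2 ⟨b, hb⟩
  obtain h1 | h2 : #(runStarts S) = 1 ∨ #(runStarts S) = 2 := by omega
  · obtain ⟨b, hb⟩ := card_eq_one.1 h1
    exact Or.inl ⟨b, (subset_arc_of_runStarts_eq_singleton ht hb).trans (arc_mono b (by omega))⟩
  · obtain ⟨b, b', hne, hbb'⟩ := card_eq_two.1 h2
    have hS : #S = 4 := by omega
    right
    by_cases hb' : b' + 1 ∈ S
    · by_cases hb : b + 1 ∈ S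
      · obtain ⟨i, hi, hSi⟩ := exists_eq_two_pairs hS hbb' hne hb hb'
        exact ⟨b, i, hi, Or.inl hSi⟩
      · obtain ⟨i, hi, hSi⟩ :=
          exists_eq_triple_insert ht hS hne.symm (hbb'.trans (pair_comm b b')) hb
        exact ⟨b', i, hi, Or.inr hSi⟩
    · obtain ⟨i, hi, hSi⟩ := exists_eq_triple_insert ht hS hne hbb' hb'
      exact ⟨b, i, hi, Or.inr hSi⟩

theorem natCast_mem_farFromZero_iff (hn : 7 ≤ n) {i : ℕ} (hi : i < n) :
    (i : ZMod n) ∈ farFromZero n ↔ 3 ≤ i ∧ i ≤ n - 3 := by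
  have hcast (k : ℕ) (hk : k < n) : (i : ZMod n) = k ↔ i = k := by
    rw [ZMod.natCast_eq_natCast_iff', Nat.mod_eq_of_lt hi, Nat.mod_eq_of_lt hk]
  have hneg (k : ℕ) (hk : k ≤ n) : (-k : ZMod n) = (n - k : ℕ) := by
    simp [Nat.cast_sub hk]
  have h2 : (i : ZMod n) = -2 ↔ i = n - 2 := by
    rw [← hcast (n - 2) (by omega), ← hneg 2 (by omega), Nat.cast_ofNat]
  have h1 : (i : ZMod n) = -1 ↔ i = n - 1 := by
    rw [← hcast (n - 1) (by omega), ← hneg 1 (by omega), Nat.cast_one]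
  have h0' := hcast 0 (by omega)
  have h1' := hcast 1 (by omega)
  have h2' := hcast 2 (by omega)
  push_cast at h0' h1' h2'
  rw [mem_farFromZero, Ne, h2, Ne, h1, Ne, h0', Ne, h1', Ne, h2']
  omega

theorem forall_farFromZero_iff [NeZero n] (hn : 7 ≤ n) {P : ZMod n → Prop} :
    (∀ i ∈ farFromZero n, P i) ↔ ∀ i : ℕ, 3 ≤ i → i ≤ n - 3 → P i := by
  constructor
  · exact fun h i h3 hi => h i ((natCast_mem_farFromZero_iff hn (by omega)).2 ⟨h3, hi⟩)
  · intro h i hi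
    rw [← ZMod.natCast_zmod_val i] at hi ⊢
    obtain ⟨h3, hi'⟩ := (natCast_mem_farFromZero_iff hn (ZMod.val_lt i)).1 hi
    exact h _ h3 hi'

end Arcs

section PairDistance

variable {n : ℕ} [NeZero n]

theorem pairDist_eq_card_pairHull {α : Type*} [DecidableEq α] (u v : ZMod n → α) :
    pairDist u v = #(pairHull {i | u i ≠ v i}) := by
  unfold pairDist
  congr 1
  ext i
  have hi : (∃ a, u a ≠ v a ∧ a - 1 = i) ↔ u (i + 1) ≠ v (i + 1) :=
    ⟨by rintro ⟨a, ha, rfl⟩; simpa using ha, fun h => ⟨i + 1, h, by ring⟩⟩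
  simp only [pairHull, mem_union, mem_image, mem_filter_univ, hi]
  grind

variable {A : Type*} [AddGroup A] [DecidableEq A]

theorem pairDist_sub_zero (u v : ZMod n → A) : pairDist (u - v) 0 = pairDist u v := by
  simp only [pairDist_eq_card_pairHull, Pi.sub_apply, Pi.zero_apply, sub_ne_zero]

theorem pairDist_zero_le_card_pairHull {c : ZMod n → A} {T : Finset (ZMod n)}
    (h : ∀ i, c i ≠ 0 → i ∈ T) : pairDist c 0 ≤ #(pairHull T) := by
  rw [pairDist_eq_card_pairHull]
  exact card_le_card (pairHull_mono fun i hi => h i (mem_filter.1 hi).2)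

theorem isMinPairDist_iff {S : Type*} [SetLike S (ZMod n → A)] [AddSubgroupClass S (ZMod n → A)]
    (C : S) (d : ℕ) : IsMinPairDist (C : Set (ZMod n → A)) d ↔
      (∀ c ∈ C, c ≠ 0 → d ≤ pairDist c 0) ∧ ∃ c ∈ C, c ≠ 0 ∧ pairDist c 0 = d := by
  refine and_congr ⟨fun h c hc hc0 => h c hc 0 (zero_mem C) hc0, fun h u hu v hv huv => ?_⟩
    ⟨?_, fun ⟨c, hc, hc0, hd⟩ => ⟨c, hc, 0, zero_mem C, hc0, hd⟩⟩
  · exact (h _ (sub_mem hu hv) (sub_ne_zero.2 huv)).trans_eq (pairDist_sub_zero u v)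
  · rintro ⟨u, hu, v, hv, huv, hd⟩
    exact ⟨u - v, sub_mem hu hv, sub_ne_zero.2 huv, (pairDist_sub_zero u v).trans hd⟩

end PairDistance

section Code

variable {n : ℕ} [NeZero n] {F E : Type*} [Field F] [Field E] [Algebra F E]

/-- The `m`-th Mattson–Solomon coefficient `∑ j, c j • ψ (m * j)` of a vector `c`: the value of
the polynomial of `c` at the `n`-th root of unity `ψ m`. -/
noncomputable def mattsonSolomon (F : Type*) [Field F] [Algebra F E] (ψ : AddChar (ZMod n) E)
    (m : ZMod n) : (ZMod n → F) →ₗ[F] E :=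
  Fintype.linearCombination F fun j => ψ (m * j)

theorem mattsonSolomon_apply (ψ : AddChar (ZMod n) E) (m : ZMod n) (c : ZMod n → F) :
    mattsonSolomon F ψ m c = ∑ j, c j • ψ (m * j) :=
  Fintype.linearCombination_apply ..

theorem mattsonSolomon_single (ψ : AddChar (ZMod n) E) (m j : ZMod n) (a : F) :
    mattsonSolomon F ψ m (Pi.single j a) = a • ψ (m * j) :=
  Fintype.linearCombination_apply_single ..

theorem aeval_polyOf (ψ : AddChar (ZMod n) E) (m : ZMod n) (c : ZMod n → F) :
    aeval (ψ m) (polyOf c) = mattsonSolomon F ψ m c := by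
  simp only [polyOf, map_sum, map_mul, aeval_C, map_pow, aeval_X, mattsonSolomon_apply,
    ← Algebra.smul_def, ← AddChar.map_nsmul_eq_pow, nsmul_eq_mul, ZMod.natCast_zmod_val, mul_comm]

theorem mattsonSolomon_card_mul [Fintype F] (ψ : AddChar (ZMod n) E) (m : ZMod n)
    (c : ZMod n → F) :
    mattsonSolomon F ψ (Fintype.card F * m) c = mattsonSolomon F ψ m c ^ Fintype.card F := by
  rw [← aeval_polyOf, ← aeval_polyOf, ← nsmul_eq_mul, AddChar.map_nsmul_eq_pow]
  exact aeval_algHom_apply (FiniteField.frobeniusAlgHom F E) (ψ m) (polyOf c)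

/-- The syndrome of a vector at the zeros `1`, `ψ 1` and `ψ (-1)`. The syndrome at `1` is taken in
`F` rather than in `E`, so that the syndrome map is onto in the case of interest. -/
noncomputable def syndrome (F : Type*) [Field F] [Algebra F E] (ψ : AddChar (ZMod n) E) :
    (ZMod n → F) →ₗ[F] F × E × E :=
  (Fintype.linearCombination F fun _ => 1).prod
    ((mattsonSolomon F ψ 1).prod (mattsonSolomon F ψ (-1)))

/-- The cyclic code over `F` with zeros `1`, `ψ 1` and `ψ (-1)`, a BCH code. -/
noncomputable def bchCode (F : Type*) [Field F] [Algebra F E] (ψ : AddChar (ZMod n) E) :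
    Submodule F (ZMod n → F) :=
  (syndrome F ψ).ker

variable {ψ : AddChar (ZMod n) E} {c : ZMod n → F}

theorem mem_bchCode : c ∈ bchCode F ψ ↔ mattsonSolomon F ψ 0 c = 0 ∧
    mattsonSolomon F ψ 1 c = 0 ∧ mattsonSolomon F ψ (-1) c = 0 := by
  have h0 : mattsonSolomon F ψ 0 c = 0 ↔ ∑ j, c j = 0 := by
    rw [← map_eq_zero (algebraMap F E)]
    simp [mattsonSolomon_apply, Algebra.smul_def]
  simp [bchCode, syndrome, h0, Fintype.linearCombination_apply]

theorem bchCode_sum_smul_eval_eq_zero (hc : c ∈ bchCode F ψ) {p : E[X]} (hp : p.natDegree < 3) :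
    ∑ j, c j • (ψ (-j) * p.eval (ψ j)) = 0 := by
  obtain ⟨h0, h1, h2⟩ := mem_bchCode.1 hc
  have hterm : ∀ j, c j • (ψ (-j) * p.eval (ψ j)) = p.coeff 0 * c j • ψ (-1 * j) +
      p.coeff 1 * c j • ψ (0 * j) + p.coeff 2 * c j • ψ (1 * j) := fun j => by
    have hj : ψ (-j) * ψ j = 1 := by rw [← AddChar.map_add_eq_mul, neg_add_cancel,
      AddChar.map_zero_eq_one]
    simp only [eval_eq_sum_range' hp, sum_range_succ, sum_range_zero, Algebra.smul_def, neg_mul,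
      one_mul, zero_mul, AddChar.map_zero_eq_one]
    linear_combination (algebraMap F E (c j)) * (p.coeff 1 + p.coeff 2 * ψ j) * hj
  simp only [hterm, sum_add_distrib, ← mul_sum, ← mattsonSolomon_apply, h0, h1, h2, mul_zero,
    add_zero]

theorem four_le_hammingNorm_of_mem_bchCode [DecidableEq F] (hψ : Function.Injective ψ)
    (hc : c ∈ bchCode F ψ) (hc0 : c ≠ 0) : 4 ≤ hammingNorm c := by
  obtain ⟨j, hj⟩ := Function.ne_iff.1 hc0
  by_contra! hlt
  set S : Finset (ZMod n) := {i | c i ≠ 0}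
  have hjS : j ∈ S := by simpa [S] using hj
  have hcard : #S ≤ 3 := Nat.lt_succ_iff.1 hlt
  have hdeg : (∏ k ∈ S.erase j, (X - C (ψ k))).natDegree < 3 := by
    rw [natDegree_finsetProd_X_sub_C_eq_card, card_erase_of_mem hjS]
    omega
  have hsum := bchCode_sum_smul_eval_eq_zero hc hdeg
  rw [sum_eq_single j (fun i _ hij => ?_) (by simp)] at hsum
  · have hne : ∏ k ∈ S.erase j, (ψ j - ψ k) ≠ 0 :=
      prod_ne_zero_iff.2 fun k hk => sub_ne_zero.2 (hψ.ne (ne_of_mem_erase hk).symm)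
    refine smul_ne_zero hj (mul_ne_zero (ψ.val_isUnit _).ne_zero ?_) hsum
    simpa [eval_prod] using hne
  · by_cases hi : c i = 0
    · rw [hi, zero_smul]
    · have hiS : i ∈ S.erase j := mem_erase.2 ⟨hij, by simpa [S] using hi⟩
      rw [eval_prod, prod_eq_zero hiS (by simp), mul_zero, smul_zero]

theorem bchCode_two_term_relation (hc : c ∈ bchCode F ψ) {a a' k l : ZMod n} (ha : a ≠ a')
    (hS : ∀ j, c j ≠ 0 → j ∈ ({a, a', k, l} : Finset (ZMod n))) :
    c a • (ψ (-a) * ((ψ a - ψ k) * (ψ a - ψ l))) +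
      c a' • (ψ (-a') * ((ψ a' - ψ k) * (ψ a' - ψ l))) = 0 := by
  have hdeg : ((X - C (ψ k)) * (X - C (ψ l))).natDegree < 3 := by compute_degree!
  have hsum := bchCode_sum_smul_eval_eq_zero hc hdeg
  rw [← sum_subset (subset_univ {a, a'}) (fun j _ hj => ?_), sum_pair ha] at hsum
  · simpa using hsum
  · by_cases hcj : c j = 0
    · rw [hcj, zero_smul]
    · obtain rfl | rfl : j = k ∨ j = l := by
        have := hS j hcj
        grind
      all_goals simp

end Code

section Ratio

variable {n : ℕ} {F E : Type*} [Field F] [Field E] [Algebra F E]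

/-- The quotient `(ψ (i + 1) - 1) / (ψ i - ψ 1)`, which is `(δ ^ (i + 1) - 1) / (δ ^ i - δ)` for
`δ = ψ 1`, is a nonzero element of the base field. -/
def RatioInBase (F : Type*) [Field F] [Algebra F E] (ψ : AddChar (ZMod n) E) (i : ZMod n) : Prop :=
  ∃ τ : F, τ ≠ 0 ∧ algebraMap F E τ = (ψ (i + 1) - 1) / (ψ i - ψ 1)

variable {ψ : AddChar (ZMod n) E} {i : ZMod n}

theorem ratioInBase_of_mul_eq {u v : F} (hu : u ≠ 0) (hv : v ≠ 0) (hi : ψ i ≠ ψ 1)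
    (h : algebraMap F E u * (ψ (i + 1) - 1) = algebraMap F E v * (ψ i - ψ 1)) :
    RatioInBase F ψ i := by
  have hu' : algebraMap F E u ≠ 0 := (_root_.map_ne_zero _).2 hu
  refine ⟨v / u, div_ne_zero hv hu, ?_⟩
  rw [map_div₀, div_eq_div_iff hu' (sub_ne_zero.2 hi), ← h, mul_comm]

theorem ratioInBase_natCast (i : ℕ) : RatioInBase F ψ i ↔
    ∃ τ : F, τ ≠ 0 ∧ algebraMap F E τ = (ψ 1 ^ (i + 1) - 1) / (ψ 1 ^ i - ψ 1) := by
  simp only [RatioInBase, ← AddChar.map_nsmul_eq_pow, nsmul_one, Nat.cast_add, Nat.cast_one]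

variable [NeZero n] {c : ZMod n → F}

theorem ratioInBase_of_support_eq_two_pairs (hψ : Function.Injective ψ) (hc : c ∈ bchCode F ψ)
    {b : ZMod n} (hi0 : i ≠ 0) (hi1 : i ≠ 1)
    (hS : ∀ j, c j ≠ 0 ↔ j ∈ ({b, b + 1, b + i, b + (i + 1)} : Finset (ZMod n))) :
    RatioInBase F ψ i := by
  have : Nontrivial (ZMod n) := ⟨i, 0, hi0⟩
  have hrel := bchCode_two_term_relation hc (a := b) (a' := b + 1) (by simp) fun j => (hS j).1
  have hi0' : 1 - ψ i ≠ 0 := sub_ne_zero.2 (ψ.map_zero_eq_one ▸ hψ.ne hi0.symm)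
  have hb : ψ b ≠ 0 := (ψ.val_isUnit b).ne_zero
  have h1 : ψ 1 ≠ 0 := (ψ.val_isUnit 1).ne_zero
  refine ratioInBase_of_mul_eq (u := c b) (v := -c (b + 1)) ((hS _).2 (by simp))
    (neg_ne_zero.2 ((hS _).2 (by simp))) (hψ.ne hi1) ?_
  refine mul_left_cancel₀ (mul_ne_zero hb hi0') ?_
  simp only [AddChar.map_add_eq_mul, AddChar.map_neg_eq_inv, Algebra.smul_def] at hrel
  field_simp at hrel
  simp only [AddChar.map_add_eq_mul, map_neg]
  linear_combination -hrel

theorem ratioInBase_of_support_eq_triple_insert (hψ : Function.Injective ψ)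
    (hc : c ∈ bchCode F ψ) {b : ZMod n} (h2 : (2 : ZMod n) ≠ 0) (hi1 : i ≠ 1)
    (hS : ∀ j, c j ≠ 0 ↔ j ∈ ({b, b + 1, b + 2, b + (i + 1)} : Finset (ZMod n))) :
    RatioInBase F ψ i := by
  have hrel := bchCode_two_term_relation hc (a := b) (a' := b + 2) (k := b + 1) (l := b + (i + 1))
    (by simpa using h2) fun j => by
      rw [insert_comm (b + 2)]
      exact (hS j).1
  have hψ2 : ψ 2 = ψ 1 ^ 2 := by rw [← AddChar.map_nsmul_eq_pow, nsmul_one, Nat.cast_ofNat]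
  have h10 : (1 : ZMod n) ≠ 0 := fun h => h2 (by linear_combination 2 * h)
  have h1' : 1 - ψ 1 ≠ 0 := sub_ne_zero.2 (ψ.map_zero_eq_one ▸ hψ.ne h10.symm)
  have hb : ψ b ≠ 0 := (ψ.val_isUnit b).ne_zero
  have h1 : ψ 1 ≠ 0 := (ψ.val_isUnit 1).ne_zero
  refine ratioInBase_of_mul_eq (u := c b) (v := c (b + 2)) ((hS _).2 (by simp))
    ((hS _).2 (by simp)) (hψ.ne hi1) ?_
  refine mul_left_cancel₀ (mul_ne_zero hb h1') ?_
  simp only [AddChar.map_add_eq_mul, AddChar.map_neg_eq_inv, hψ2, Algebra.smul_def] at hrel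
  field_simp at hrel
  rw [AddChar.map_add_eq_mul]
  linear_combination -hrel

theorem exists_mem_bchCode_of_ratioInBase (hψ : Function.Injective ψ) (h : RatioInBase F ψ i)
    (hi : i ∈ farFromZero n) :
    ∃ c ∈ bchCode F ψ, c ≠ 0 ∧ ∀ j, c j ≠ 0 → j ∈ ({0, 1, i, i + 1} : Finset (ZMod n)) := by
  obtain ⟨-, hi1, hi0, hi1', -⟩ := mem_farFromZero.1 hi
  obtain ⟨τ, -, hτ⟩ := h
  rw [eq_div_iff (sub_ne_zero.2 (hψ.ne hi1')), AddChar.map_add_eq_mul] at hτ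
  have : Nontrivial (ZMod n) := ⟨i, 0, hi0⟩
  have hψi : ψ i ≠ 0 := (ψ.val_isUnit i).ne_zero
  have hψ1 : ψ 1 ≠ 0 := (ψ.val_isUnit 1).ne_zero
  refine ⟨Pi.single 0 1 - Pi.single 1 τ + Pi.single i τ - Pi.single (i + 1) 1,
    mem_bchCode.2 ⟨?_, ?_, ?_⟩, Function.ne_iff.2 ⟨0, ?_⟩, fun j hj => ?_⟩
  · simp [mattsonSolomon_single]
  · simp only [map_sub, map_add, mattsonSolomon_single, one_mul, Algebra.smul_def, map_one,
      AddChar.map_zero_eq_one, AddChar.map_add_eq_mul]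
    linear_combination hτ
  · simp only [map_sub, map_add, mattsonSolomon_single, neg_mul, one_mul, Algebra.smul_def,
      map_one, neg_zero, AddChar.map_zero_eq_one, AddChar.map_neg_eq_inv, AddChar.map_add_eq_mul]
    field_simp
    linear_combination -hτ
  · have : (0 : ZMod n) ≠ i + 1 := fun h => hi1 (by linear_combination -h)
    simp [hi0.symm, this]
  · contrapose! hj
    simp only [mem_insert, mem_singleton, not_or] at hj
    simp [hj]

end Ratio

section Zeros

/-- The exponents `0, 1, -1, Q, -Q`. For `Q` the cardinality of `F`, the last two are the images
of `1` and `-1` under the Frobenius of `F`. -/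
def zeroExponents {n : ℕ} (Q : ZMod n) : Fin 5 → ZMod n :=
  ![0, 1, -1, Q, -Q]

theorem seven_le_of_sq_eq_one {n : ℕ} [NeZero n] {x : ZMod n} (hx : x ^ 2 = 1) (h1 : x ≠ 1)
    (h1' : x ≠ -1) : 7 ≤ n := by
  by_contra! hlt
  have hn : n ≠ 0 := NeZero.ne n
  revert x
  interval_cases n <;> first | contradiction | decide

theorem zeroExponents_injective {n : ℕ} [NeZero n] {Q : ZMod n} (hsq : Q ^ 2 = 1) (h1 : Q ≠ 1)
    (h1' : Q ≠ -1) : Function.Injective (zeroExponents Q) := by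
  have hn := seven_le_of_sq_eq_one hsq h1 h1'
  have h2 : (2 : ZMod n) ≠ 0 := by
    rw [← Nat.cast_ofNat, Ne, ZMod.natCast_eq_zero_iff]
    exact Nat.not_dvd_of_pos_of_lt two_pos (by omega)
  have hnodup : [0, 1, -1, Q, -Q].Nodup := by grind
  exact List.nodup_ofFn.1 hnodup

variable {n : ℕ} [NeZero n] {F E : Type*} [Field F] [Field E] [Algebra F E]
  {ψ : AddChar (ZMod n) E} {c : ZMod n → F}

theorem mattsonSolomon_eq_sum_range (m : ZMod n) {b : ZMod n} {d : ℕ} (hd : d ≤ n)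
    (hS : ∀ j, c j ≠ 0 → j ∈ arc b d) :
    mattsonSolomon F ψ m c = ∑ k ∈ range d, c (b + k) • ψ (m * (b + k)) := by
  rw [mattsonSolomon_apply, ← sum_image (f := fun j => c j • ψ (m * j)) (injOn_add_natCast b hd)]
  refine (sum_subset (subset_univ _) fun j _ hj => ?_).symm
  rw [not_ne_iff.1 (mt (hS j) hj), zero_smul]

theorem eq_zero_of_support_subset_arc (hψ : Function.Injective ψ) {d : ℕ} {z : Fin d → ZMod n}
    (hz : Function.Injective z) (hc : ∀ i, mattsonSolomon F ψ (z i) c = 0) {b : ZMod n}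
    (hS : ∀ j, c j ≠ 0 → j ∈ arc b d) : c = 0 := by
  have hd : d ≤ n := by simpa [ZMod.card] using Fintype.card_le_of_injective z hz
  have hzero : (fun k : Fin d => algebraMap F E (c (b + (k : ℕ)))) = 0 := by
    refine Matrix.eq_zero_of_forall_index_sum_mul_pow_eq_zero (hψ.comp hz) fun i => ?_
    refine (mul_eq_zero.1 (?_ : ψ (z i * b) * _ = 0)).resolve_left (ψ.val_isUnit _).ne_zero
    rw [← hc i, mattsonSolomon_eq_sum_range (z i) hd hS, mul_sum, sum_range]
    refine sum_congr rfl fun k _ => ?_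
    rw [Function.comp_apply, ← AddChar.map_nsmul_eq_pow, nsmul_eq_mul, Algebra.smul_def, mul_add,
      AddChar.map_add_eq_mul, mul_comm (k : ZMod n)]
    ring
  ext j
  by_contra hj
  obtain ⟨k, hk, rfl⟩ := mem_image.1 (hS j hj)
  exact hj ((map_eq_zero _).1 (congrFun hzero ⟨k, mem_range.1 hk⟩))

theorem prod_X_sub_C_dvd_map_polyOf_iff (hψ : Function.Injective ψ) {ι : Type*} [Fintype ι]
    {z : ι → ZMod n} (hz : Function.Injective z) :
    ∏ i, (X - C (ψ (z i))) ∣ (polyOf c).map (algebraMap F E) ↔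
      ∀ i, mattsonSolomon F ψ (z i) c = 0 := by
  have hroot (m : ZMod n) :
      X - C (ψ m) ∣ (polyOf c).map (algebraMap F E) ↔ mattsonSolomon F ψ m c = 0 := by
    rw [dvd_iff_isRoot, IsRoot, eval_map_algebraMap, aeval_polyOf]
  simp_rw [← hroot]
  exact ⟨fun h i => (dvd_prod_of_mem (fun i => X - C (ψ (z i))) (mem_univ i)).trans h,
    Fintype.prod_dvd_of_coprime (pairwise_coprime_X_sub_C (hψ.comp hz))⟩

variable [Fintype F]

theorem mem_bchCode_iff_forall_zeroExponents :
    c ∈ bchCode F ψ ↔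
      ∀ i, mattsonSolomon F ψ (zeroExponents (Fintype.card F : ZMod n) i) c = 0 := by
  have hfrob (m : ZMod n) (h : mattsonSolomon F ψ m c = 0) :
      mattsonSolomon F ψ (Fintype.card F * m) c = 0 := by
    rw [mattsonSolomon_card_mul, h, zero_pow Fintype.card_ne_zero]
  rw [mem_bchCode]
  constructor
  · rintro ⟨h0, h1, h2⟩ i
    fin_cases i
    exacts [h0, h1, h2, by simpa [zeroExponents] using hfrob 1 h1,
      by simpa [zeroExponents] using hfrob (-1) h2]
  · exact fun h => ⟨h 0, h 1, h 2⟩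

theorem generator_dvd_iff (hψ : Function.Injective ψ)
    (hz : Function.Injective (zeroExponents (Fintype.card F : ZMod n))) :
    (X - C ((ψ 1)⁻¹ ^ Fintype.card F)) * (X - C (ψ 1)⁻¹) * (X - 1) * (X - C (ψ 1)) *
        (X - C (ψ 1 ^ Fintype.card F)) ∣ (polyOf c).map (algebraMap F E) ↔ c ∈ bchCode F ψ := by
  rw [mem_bchCode_iff_forall_zeroExponents, ← prod_X_sub_C_dvd_map_polyOf_iff hψ hz]
  have hprod : ∏ i, (X - C (ψ (zeroExponents (Fintype.card F : ZMod n) i))) =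
      (X - C ((ψ 1)⁻¹ ^ Fintype.card F)) * (X - C (ψ 1)⁻¹) * (X - 1) * (X - C (ψ 1)) *
        (X - C (ψ 1 ^ Fintype.card F)) := by
    simp only [← AddChar.map_neg_eq_inv, ← AddChar.map_nsmul_eq_pow, nsmul_eq_mul, mul_neg,
      mul_one, ← C_1, ← ψ.map_zero_eq_one]
    simp only [Fin.prod_univ_five, zeroExponents, Matrix.cons_val]
    ring
  rw [hprod]

end Zeros

section Dimension

variable {n : ℕ} {F : Type*} [Field F]

/-- The vector of length `n` whose entries on the arc `b, b + 1, …, b + (d - 1)` are prescribed,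
extended by zero. -/
noncomputable def extendArc (F : Type*) [Field F] (b : ZMod n) (d : ℕ) :
    (Fin d → F) →ₗ[F] (ZMod n → F) :=
  Function.ExtendByZero.linearMap F fun k : Fin d => b + ((k : ℕ) : ZMod n)

theorem extendArc_injective (b : ZMod n) {d : ℕ} (hd : d ≤ n) :
    Function.Injective (extendArc F b d) :=
  Function.extend_injective (fun k k' h => Fin.ext (injOn_add_natCast b hd
    (mem_coe.2 (mem_range.2 k.2)) (mem_coe.2 (mem_range.2 k'.2)) h)) _

theorem mem_arc_of_extendArc_ne_zero {b : ZMod n} {d : ℕ} {v : Fin d → F} {j : ZMod n}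
    (hj : extendArc F b d v j ≠ 0) : j ∈ arc b d := by
  contrapose! hj
  refine Function.extend_apply' _ _ _ ?_
  rintro ⟨k, rfl⟩
  exact hj (add_natCast_mem_arc k.2)

variable {W : Type*} [AddCommGroup W] [Module F W]

theorem exists_ne_zero_of_finrank_lt [FiniteDimensional F W] (f : (ZMod n → F) →ₗ[F] W)
    (b : ZMod n) {d : ℕ} (hd : d ≤ n) (hW : Module.finrank F W < d) :
    ∃ c ∈ f.ker, c ≠ 0 ∧ ∀ j, c j ≠ 0 → j ∈ arc b d := by
  have hker := LinearMap.ker_ne_bot_of_finrank_lt (f := f ∘ₗ extendArc F b d) (by simpa using hW)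
  obtain ⟨v, hv, hv0⟩ := Submodule.exists_mem_ne_zero_of_ne_bot hker
  exact ⟨extendArc F b d v, hv, (map_ne_zero_iff _ (extendArc_injective b hd)).2 hv0,
    fun j => mem_arc_of_extendArc_ne_zero⟩

theorem surjective_of_finrank_eq [FiniteDimensional F W] {f : (ZMod n → F) →ₗ[F] W}
    {b : ZMod n} {d : ℕ} (hd : d ≤ n) (hW : Module.finrank F W = d)
    (h : ∀ c ∈ f.ker, (∀ j, c j ≠ 0 → j ∈ arc b d) → c = 0) : Function.Surjective f := by
  have hinj : Function.Injective (f ∘ₗ extendArc F b d) := by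
    refine (injective_iff_map_eq_zero _).2 fun v hv => ?_
    exact (map_eq_zero_iff _ (extendArc_injective b hd)).1
      (h _ hv fun j => mem_arc_of_extendArc_ne_zero)
  have hsurj := (LinearMap.injective_iff_surjective_of_finrank_eq_finrank (by simp [hW])).1 hinj
  exact .of_comp (g := extendArc F b d) hsurj

end Dimension

section MinPairDist

variable {n : ℕ} [NeZero n] {F E : Type*} [Field F] [Field E] [Algebra F E]
  {ψ : AddChar (ZMod n) E}

theorem finrank_syndrome_codomain (hE : Module.finrank F E = 2) :
    Module.finrank F (F × E × E) = 5 := by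
  have := Module.finite_of_finrank_eq_succ hE
  simp [hE]

theorem exists_pairDist_le_of_ratioInBase [DecidableEq F] (hψ : Function.Injective ψ) {i : ZMod n}
    (hi : i ∈ farFromZero n) (h : RatioInBase F ψ i) :
    ∃ c ∈ bchCode F ψ, c ≠ 0 ∧ pairDist c 0 ≤ 6 := by
  obtain ⟨c, hc, hc0, hS⟩ := exists_mem_bchCode_of_ratioInBase hψ h hi
  refine ⟨c, hc, hc0, ?_⟩
  simpa using (pairDist_zero_le_card_pairHull (by simpa using hS)).trans
    (card_pairHull_two_pairs_le 0 i)

variable [Fintype F] {c : ZMod n → F}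

theorem eq_zero_of_mem_bchCode (hψ : Function.Injective ψ)
    (hz : Function.Injective (zeroExponents (Fintype.card F : ZMod n))) (hc : c ∈ bchCode F ψ)
    {b : ZMod n} (hS : ∀ j, c j ≠ 0 → j ∈ arc b 5) : c = 0 :=
  eq_zero_of_support_subset_arc hψ hz (mem_bchCode_iff_forall_zeroExponents.1 hc) hS

theorem natCard_bchCode (hψ : Function.Injective ψ)
    (hz : Function.Injective (zeroExponents (Fintype.card F : ZMod n)))
    (hE : Module.finrank F E = 2) : Nat.card (bchCode F ψ) = Fintype.card F ^ (n - 5) := by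
  have := Module.finite_of_finrank_eq_succ hE
  have hn : 5 ≤ n := by simpa [ZMod.card] using Fintype.card_le_of_injective _ hz
  have hsurj : Function.Surjective (syndrome F ψ) :=
    surjective_of_finrank_eq (b := 0) hn (finrank_syndrome_codomain hE) fun c hc hS =>
      eq_zero_of_mem_bchCode hψ hz hc hS
  have hrank := (syndrome F ψ).finrank_range_add_finrank_ker
  rw [LinearMap.range_eq_top.2 hsurj, finrank_top, finrank_syndrome_codomain hE,
    Module.finrank_fintype_fun_eq_card, ZMod.card] at hrank
  rw [Module.natCard_eq_pow_finrank (K := F), Nat.card_eq_fintype_card]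
  congr 1
  exact (Nat.sub_eq_of_eq_add' hrank.symm).symm

variable [DecidableEq F]

theorem exists_ratioInBase_of_pairDist_le (hψ : Function.Injective ψ)
    (hz : Function.Injective (zeroExponents (Fintype.card F : ZMod n))) (hn : 7 ≤ n)
    (hc : c ∈ bchCode F ψ) (hc0 : c ≠ 0) (hd : pairDist c 0 ≤ 6) :
    ∃ i ∈ farFromZero n, RatioInBase F ψ i := by
  rw [pairDist_eq_card_pairHull] at hd
  have hweight := four_le_hammingNorm_of_mem_bchCode hψ hc hc0
  obtain ⟨b, hb⟩ | ⟨b, i, hi, hS⟩ := subset_arc_or_four_points_of_card_pairHull_le hn hweight hd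
  · exact absurd (eq_zero_of_mem_bchCode hψ hz hc fun j hj => hb (by simpa using hj)) hc0
  · obtain ⟨-, -, hi0, hi1, -⟩ := mem_farFromZero.1 hi
    refine ⟨i, hi, ?_⟩
    rcases hS with hS | hS
    · exact ratioInBase_of_support_eq_two_pairs (b := b) hψ hc hi0 hi1 fun j => by simp [← hS]
    · have h2 : (2 : ZMod n) ≠ 0 := fun h =>
        hz.ne (by decide : (1 : Fin 5) ≠ 2) (show (1 : ZMod n) = -1 by linear_combination h)
      exact ratioInBase_of_support_eq_triple_insert (b := b) hψ hc h2 hi1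
        fun j => by simp [← hS]

theorem isMinPairDist_bchCode_iff (hψ : Function.Injective ψ)
    (hz : Function.Injective (zeroExponents (Fintype.card F : ZMod n))) (hn : 7 ≤ n)
    (hE : Module.finrank F E = 2) : IsMinPairDist (bchCode F ψ : Set (ZMod n → F)) 7 ↔
      ∀ i ∈ farFromZero n, ¬ RatioInBase F ψ i := by
  have := Module.finite_of_finrank_eq_succ hE
  rw [isMinPairDist_iff]
  constructor
  · rintro ⟨hmin, -⟩ i hi h
    obtain ⟨c, hc, hc0, hd⟩ := exists_pairDist_le_of_ratioInBase hψ hi h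
    exact absurd (hmin c hc hc0) (by omega)
  · intro h
    have hmin : ∀ c ∈ bchCode F ψ, c ≠ 0 → 7 ≤ pairDist c 0 := fun c hc hc0 => by
      by_contra! hlt
      obtain ⟨i, hi, hi'⟩ :=
        exists_ratioInBase_of_pairDist_le hψ hz hn hc hc0 (Nat.lt_succ_iff.1 hlt)
      exact h i hi hi'
    obtain ⟨c, hc, hc0, hS⟩ := exists_ne_zero_of_finrank_lt (syndrome F ψ) 0 (d := 6) (by omega)
      (by rw [finrank_syndrome_codomain hE]; norm_num)
    refine ⟨hmin, c, hc, hc0, le_antisymm ?_ (hmin c hc hc0)⟩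
    exact (pairDist_zero_le_card_pairHull hS).trans (card_pairHull_arc_le 0 6)

end MinPairDist

section RootOfUnity

variable {n : ℕ} {E : Type*} [Field E] {ψ : AddChar (ZMod n) E}

theorem exists_injective_addChar [NeZero n] {δ : E} (hδ : orderOf δ = n) :
    ∃ ψ : AddChar (ZMod n) E, Function.Injective ψ ∧ ψ 1 = δ := by
  have hδn : δ ^ n = 1 := by rw [← hδ, pow_orderOf_eq_one]
  refine ⟨AddChar.zmodChar n hδn, fun a b hab => ?_, ?_⟩
  · rw [AddChar.zmodChar_apply, AddChar.zmodChar_apply] at hab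
    exact ZMod.val_injective n (pow_injOn_Iio_orderOf (hδ.symm ▸ ZMod.val_lt a)
      (hδ.symm ▸ ZMod.val_lt b) hab)
  · simpa using AddChar.zmodChar_apply' hδn 1

theorem natCast_card_eq_one [Fintype E] (hψ : Function.Injective ψ) :
    (Fintype.card E : ZMod n) = 1 :=
  hψ (by rw [← nsmul_one, AddChar.map_nsmul_eq_pow, FiniteField.pow_card])

theorem mem_range_algebraMap_of_pow_card_eq {F : Type*} [Field F] [Fintype F]
    [Algebra F E] {x : E} (hx : x ^ Fintype.card F = x) : x ∈ (algebraMap F E).range := by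
  have hsplits : (X ^ Fintype.card F - X : F[X]).Splits := by
    rw [splits_iff_card_roots, FiniteField.roots_X_pow_card_sub_X,
      FiniteField.X_pow_card_sub_X_natDegree_eq F Fintype.one_lt_card]
    rfl
  have hne := FiniteField.X_pow_card_sub_X_ne_zero F (Fintype.one_lt_card (α := F))
  exact hsplits.mem_range_of_isRoot hne (by simp [hx])

theorem natCast_card_ne_one {F : Type*} [Field F] [Fintype F] [Algebra F E]
    (h : ψ 1 ∉ Set.range (algebraMap F E)) : (Fintype.card F : ZMod n) ≠ 1 := fun h1 =>
  h (mem_range_algebraMap_of_pow_card_eq (by rw [← AddChar.map_nsmul_eq_pow, nsmul_one, h1]))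

end RootOfUnity

end

theorem stmt13_general {q n : ℕ} [NeZero n] {F E : Type*} [Field F] [Fintype F] [DecidableEq F]
    [Field E] [Fintype E] [Algebra F E]
    (hq : Fintype.card F = q) (hE : Fintype.card E = q ^ 2) (hn : ¬ n ∣ q + 1)
    {δ : E} (hδF : δ ∉ Set.range (algebraMap F E)) (hδ : orderOf δ = n)
    (Code : Set (ZMod n → F))
    (hCode : Code = {c : ZMod n → F |
      ((X - C (δ⁻¹ ^ q)) * (X - C δ⁻¹) * (X - 1) * (X - C δ) * (X - C (δ ^ q))) ∣
        (polyOf c).map (algebraMap F E)}) :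
    (IsMinPairDist Code 7 ∧ Nat.card Code = q ^ (n - 7 + 2)) ↔
      ∀ i : ℕ, 3 ≤ i → i ≤ n - 3 →
        ¬ ∃ τ : F, τ ≠ 0 ∧ algebraMap F E τ = (δ ^ (i + 1) - 1) / (δ ^ i - δ) := by
  obtain ⟨ψ, hψ, rfl⟩ := exists_injective_addChar hδ
  subst hq
  have hsq : (Fintype.card F : ZMod n) ^ 2 = 1 := by
    rw [← Nat.cast_pow, ← hE, natCast_card_eq_one hψ]
  have h1 := natCast_card_ne_one hδF
  have h1' : (Fintype.card F : ZMod n) ≠ -1 := fun h =>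
    hn ((ZMod.natCast_eq_zero_iff _ n).1 (by rw [Nat.cast_add_one, h, neg_add_cancel]))
  have hn7 := seven_le_of_sq_eq_one hsq h1 h1'
  have hz := zeroExponents_injective hsq h1 h1'
  have hfin : Module.finrank F E = 2 :=
    Nat.pow_right_injective Fintype.one_lt_card (Module.card_eq_pow_finrank.symm.trans hE)
  obtain rfl : Code = bchCode F ψ := hCode.trans (Set.ext fun c => generator_dvd_iff hψ hz)
  have hcard : Nat.card (bchCode F ψ) = Fintype.card F ^ (n - 7 + 2) := by
    rw [natCard_bchCode hψ hz hfin]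
    congr 1
    omega
  refine (and_iff_left hcard).trans ((isMinPairDist_bchCode_iff hψ hz hn7 hfin).trans ?_)
  simp only [forall_farFromZero_iff hn7, ratioInBase_natCast]

/-- in the setting of the cyclic code with generator polynomial
`g(x) = (x−δ^{−q})(x−δ^{−1})(x−1)(x−δ)(x−δ^q)`, with `n` odd and minimum Hamming
distance `4`, the code is an `(n,7)_q` MDS symbol-pair code if and only if for every
`3 ≤ i ≤ n−3`, the element `(δ^{i+1} − 1)/(δ^i − δ)` does not lie in `F_q*`. -/
theorem stmt13 {q n : ℕ} [NeZero n] {F E : Type*} [Field F] [Fintype F] [DecidableEq F]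
    [Field E] [Fintype E] [Algebra F E]
    (hq : Fintype.card F = q) (hE : Fintype.card E = q ^ 2)
    (hodd : Odd n) (hdvd : n ∣ q ^ 2 - 1) (hn : q + 1 < n)
    {δ : E} (hδ0 : δ ≠ 0) (hδF : δ ∉ Set.range (algebraMap F E)) (hδ : orderOf δ = n)
    (Code : Set (ZMod n → F))
    (hCode : Code = {c : ZMod n → F |
      ((X - C (δ⁻¹ ^ q)) * (X - C δ⁻¹) * (X - 1) * (X - C δ) * (X - C (δ ^ q))) ∣
        (polyOf c).map (algebraMap F E)})
    (hd4 : (∀ c ∈ Code, c ≠ 0 → 4 ≤ hammingNorm c) ∧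
      ∃ c ∈ Code, c ≠ 0 ∧ hammingNorm c = 4) :
    (IsMinPairDist Code 7 ∧ Nat.card Code = q ^ (n - 7 + 2)) ↔
      ∀ i : ℕ, 3 ≤ i → i ≤ n - 3 →
        ¬ ∃ τ : F, τ ≠ 0 ∧ algebraMap F E τ = (δ ^ (i + 1) - 1) / (δ ^ i - δ) := by
  exact stmt13_general hq hE (fun h => hn.not_ge (Nat.le_of_dvd q.succ_pos h)) hδF hδ Code hCode
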